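/- Let D ⊆ ℝℙⁿ be an open properly convex set whose boundary ∂D is of class C¹. Then the elliptic tube D^e ⊆ ℂℙⁿ is ℂ-convex. -/

import Mathlib

/-!
The set of nonzero vectors representing the points of an open convex `D ⊆ ℝℙⁿ` is a double cone
`C ∪ -C` with `C` open and convex: the points of the double cone visible from a given one form a
clopen part of it, and this part is convex. Since a segment in `D` lifts to a segment in `C`, and
since two complex numbers at angle at most `π / 2` can be rotated into the closed first quadrant,
`D^e` is the image in `ℂℙⁿ` of the open convex set `C + iC`.

The image `E` of an open convex set `T ∌ 0` is always ℂ-convex. By Hahn–Banach some complex linear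
form has no zero on `T`, so `E` contains no line. Over a point of `E` the lifts to `T` form a
nonempty convex set, so a partition of unity provides a continuous lift `E → T`; it exhibits the
intersection of `E` with a line, the projectivization of a plane `W`, as a retract of the convex set
`T ∩ W`, hence as a contractible set.
-/

open scoped ComplexConjugate

noncomputable section

abbrev RV (n : ℕ) : Type := Fin (n + 1) → ℝ
abbrev CV (n : ℕ) : Type := Fin (n + 1) → ℂ
abbrev RP (n : ℕ) : Type := Projectivization ℝ (RV n)
abbrev CP (n : ℕ) : Type := Projectivization ℂ (CV n)

/-- The quotient topology on a projectivization. -/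
instance projTopology {K V : Type*} [DivisionRing K] [AddCommGroup V] [Module K V]
    [TopologicalSpace V] : TopologicalSpace (Projectivization K V) :=
  inferInstanceAs (TopologicalSpace (Quotient (projectivizationSetoid K V)))

/-- Complexification of a real vector. -/
def cplx {n : ℕ} (v : RV n) : CV n := fun i => (v i : ℂ)

/-- The closed (possibly degenerate) projective segment spanned by two lifts. -/
def realSeg {n : ℕ} (v₀ v₁ : RV n) : Set (RP n) :=
  {x | ∃ c₀ c₁ : ℝ, 0 ≤ c₀ * c₁ ∧ ∃ h : c₀ • v₀ + c₁ • v₁ ≠ 0,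
    x = Projectivization.mk ℝ (c₀ • v₀ + c₁ • v₁) h}

/-- The elliptic tube over the closed segment determined by the lifts `v₀ v₁`. -/
def segTube {n : ℕ} (v₀ v₁ : RV n) : Set (CP n) :=
  {z | ∃ c₀ c₁ : ℂ, 0 ≤ (c₀ * conj c₁).re ∧ ∃ h : c₀ • cplx v₀ + c₁ • cplx v₁ ≠ 0,
    z = Projectivization.mk ℂ (c₀ • cplx v₀ + c₁ • cplx v₁) h}

/-- The elliptic tube over a subset `D` of real projective space: the union of the tubes
over all closed segments contained in `D`. -/
def eTube {n : ℕ} (D : Set (RP n)) : Set (CP n) :=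
  ⋃ (v₀ : RV n) (v₁ : RV n) (_ : v₀ ≠ 0) (_ : v₁ ≠ 0) (_ : realSeg v₀ v₁ ⊆ D),
    segTube v₀ v₁

/-- Real projective lines. -/
def isLineR {n : ℕ} (L : Set (RP n)) : Prop :=
  ∃ W : Submodule ℝ (RV n), Module.finrank ℝ W = 2 ∧ L = {x | x.rep ∈ W}

/-- Convexity in real projective space: the set contains no projective line and its
intersection with every projective line is connected. -/
def convexR {n : ℕ} (D : Set (RP n)) : Prop :=
  (∀ L, isLineR L → ¬ L ⊆ D) ∧ ∀ L, isLineR L → IsPreconnected (D ∩ L)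

/-- Projective hyperplanes in real projective space. -/
def isHypR {n : ℕ} (H : Set (RP n)) : Prop :=
  ∃ ξ : Module.Dual ℝ (RV n), ξ ≠ 0 ∧ H = {x | ξ x.rep = 0}

/-- Proper convexity: convex, not contained in a projective hyperplane, and containing
no affine line (projective line with one point removed). -/
def properlyConvexR {n : ℕ} (D : Set (RP n)) : Prop :=
  convexR D ∧ (∀ H, isHypR H → ¬ D ⊆ H) ∧
    ∀ L, isLineR L → ∀ p ∈ L, ¬ (L \ {p}) ⊆ D

/-- Complex projective lines in `ℂℙⁿ`. -/
def isLineC {n : ℕ} (L : Set (CP n)) : Prop :=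
  ∃ W : Submodule ℂ (CV n), Module.finrank ℂ W = 2 ∧ L = {z | z.rep ∈ W}

/-- ℂ-convexity: the set contains no complex projective line, and its intersection with
every complex projective line is connected and simply connected. -/
def cConvex {n : ℕ} (E : Set (CP n)) : Prop :=
  (∀ L, isLineC L → ¬ L ⊆ E) ∧
    ∀ L, isLineC L → IsPreconnected (E ∩ L) ∧
      ((E ∩ L).Nonempty → SimplyConnectedSpace ↥(E ∩ L))

/-- The affine chart `ℝⁿ = ℝℙⁿ \ H` of real projective space associated to `g ∈ GL(n+1,ℝ)`,
sending `x` to the class of `g (x, 1)`. -/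
def chartMap {n : ℕ} (g : Matrix.GeneralLinearGroup (Fin (n + 1)) ℝ) (x : Fin n → ℝ) : RP n :=
  Projectivization.mk ℝ ((g : Matrix (Fin (n + 1)) (Fin (n + 1)) ℝ).mulVec (Fin.snoc x 1))
    (by
      intro h0
      have h1 : ((↑g⁻¹ : Matrix (Fin (n + 1)) (Fin (n + 1)) ℝ) *
          (↑g : Matrix (Fin (n + 1)) (Fin (n + 1)) ℝ)).mulVec (Fin.snoc x 1) = 0 := by
        rw [← Matrix.mulVec_mulVec, h0, Matrix.mulVec_zero]
      rw [Units.inv_mul, Matrix.one_mulVec] at h1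
      have h2 := congrFun h1 (Fin.last n)
      simp [Fin.snoc_last] at h2)

/-- The boundary of `A ⊆ ℝⁿ` is of class `C¹`: near every boundary point it is the zero
set of a `C¹` function with nonvanishing gradient. -/
def boundaryC1 {n : ℕ} (A : Set (Fin n → ℝ)) : Prop :=
  ∀ h ∈ frontier A, ∃ (U : Set (Fin n → ℝ)) (f : (Fin n → ℝ) → ℝ),
    IsOpen U ∧ h ∈ U ∧ ContDiffOn ℝ 1 f U ∧
    frontier A ∩ U = {x ∈ U | f x = 0} ∧
    ∀ x ∈ frontier A ∩ U, fderiv ℝ f x ≠ 0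

section Projectivization

variable {K V : Type*} [DivisionRing K] [AddCommGroup V] [Module K V]

lemma rep_mk_mem_iff {S : Set V} (hS : ∀ (c : Kˣ), ∀ v ∈ S, c • v ∈ S) {v : V} (hv : v ≠ 0) :
    (Projectivization.mk K v hv).rep ∈ S ↔ v ∈ S := by
  obtain ⟨a, ha⟩ := Projectivization.exists_smul_eq_mk_rep K v hv
  rw [← ha]
  exact ⟨fun h => by simpa using hS a⁻¹ _ h, hS a v⟩

lemma rep_mk_mem_submodule_iff (W : Submodule K V) {v : V} (hv : v ≠ 0) :
    (Projectivization.mk K v hv).rep ∈ W ↔ v ∈ W :=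
  rep_mk_mem_iff (S := W) (fun c _ h => W.smul_mem c h) hv

/-- The punctured cone over a subset of projective space: all the nonzero vectors representing
its points. -/
def coneOver (D : Set (Projectivization K V)) : Set V :=
  Subtype.val '' (Projectivization.mk' K ⁻¹' D)

variable (K) in
/-- The set of the points of projective space represented by the nonzero elements of `T`. -/
def projImage (T : Set V) : Set (Projectivization K V) :=
  Projectivization.mk' K '' (Subtype.val ⁻¹' T)

variable {D : Set (Projectivization K V)} {T : Set V} {v : V}

lemma mem_coneOver_iff : v ∈ coneOver D ↔ ∃ h : v ≠ 0, Projectivization.mk K v h ∈ D := by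
  simp [coneOver]

lemma ne_zero_of_mem_coneOver (hv : v ∈ coneOver D) : v ≠ 0 :=
  (mem_coneOver_iff.1 hv).1

lemma rep_mem_coneOver_iff {x : Projectivization K V} : x.rep ∈ coneOver D ↔ x ∈ D := by
  simp [mem_coneOver_iff, x.rep_nonzero]

lemma smul_mem_coneOver_iff {c : K} (hc : c ≠ 0) : c • v ∈ coneOver D ↔ v ∈ coneOver D := by
  have mk_smul (h : c • v ≠ 0) (hv : v ≠ 0) :
      Projectivization.mk K (c • v) h = Projectivization.mk K v hv :=
    (Projectivization.mk_eq_mk_iff' K _ _ h hv).2 ⟨c, rfl⟩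
  simp only [mem_coneOver_iff]
  exact ⟨fun ⟨h, hD⟩ => ⟨(smul_ne_zero_iff.1 h).2, mk_smul h (smul_ne_zero_iff.1 h).2 ▸ hD⟩,
    fun ⟨hv, hD⟩ => ⟨smul_ne_zero hc hv, (mk_smul (smul_ne_zero hc hv) hv).symm ▸ hD⟩⟩

lemma neg_mem_coneOver_iff : -v ∈ coneOver D ↔ v ∈ coneOver D := by
  simpa using smul_mem_coneOver_iff (v := v) (neg_ne_zero.2 (one_ne_zero (α := K)))

lemma mem_coneOver_of_smul_mem {c : K} (h : c • v ∈ coneOver D) : v ∈ coneOver D :=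
  (smul_mem_coneOver_iff (smul_ne_zero_iff.1 (ne_zero_of_mem_coneOver h)).1).1 h

lemma mem_projImage_iff {x : Projectivization K V} (hT : 0 ∉ T) :
    x ∈ projImage K T ↔ ∃ c : K, c • x.rep ∈ T := by
  constructor
  · rintro ⟨v, hv, rfl⟩
    obtain ⟨a, ha⟩ := Projectivization.exists_smul_eq_mk_rep K v.1 v.2
    refine ⟨(a⁻¹ : Kˣ), ?_⟩
    rwa [Projectivization.mk'_eq_mk, ← ha, ← Units.smul_def, inv_smul_smul]
  · rintro ⟨c, hc⟩
    have h0 : c • x.rep ≠ 0 := fun h => hT (h ▸ hc)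
    refine ⟨⟨c • x.rep, h0⟩, hc, ?_⟩
    calc Projectivization.mk K (c • x.rep) h0
      _ = Projectivization.mk K x.rep x.rep_nonzero :=
        (Projectivization.mk_eq_mk_iff' K _ _ _ _).2 ⟨c, rfl⟩
      _ = x := x.mk_rep

lemma mk_mem_projImage_iff (hT : 0 ∉ T) (hv : v ≠ 0) :
    Projectivization.mk K v hv ∈ projImage K T ↔ ∃ c : K, c • v ∈ T := by
  rw [mem_projImage_iff hT]
  exact rep_mk_mem_iff (S := {v | ∃ c : K, c • v ∈ T})
    (fun a v ⟨c, hc⟩ => ⟨c * (a⁻¹ : Kˣ), by simpa [mul_smul, Units.smul_def] using hc⟩) hv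

section Topology

variable [TopologicalSpace V]

lemma isQuotientMap_mk' :
    Topology.IsQuotientMap (Projectivization.mk' K : {v : V // v ≠ 0} → Projectivization K V) :=
  isQuotientMap_quot_mk

lemma isOpen_setOf_rep_mem {S : Set V} (hSo : IsOpen S) (hS : ∀ (c : Kˣ), ∀ v ∈ S, c • v ∈ S) :
    IsOpen {x : Projectivization K V | x.rep ∈ S} := by
  rw [← isQuotientMap_mk'.isOpen_preimage]
  convert hSo.preimage continuous_subtype_val using 1
  ext v
  exact rep_mk_mem_iff hS v.2

lemma isOpen_coneOver [T1Space V] (hD : IsOpen D) : IsOpen (coneOver D) :=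
  isOpen_ne.isOpenMap_subtype_val _ (hD.preimage isQuotientMap_mk'.continuous)

/-- The sign of `f * g` is well defined on projective space, unlike those of `f` and `g`. -/
lemma exists_dual_mul_eq_zero_of_isPreconnected {V : Type*} [AddCommGroup V] [Module ℝ V]
    [TopologicalSpace V] {L : Set (Projectivization ℝ V)} (hL : IsPreconnected L)
    {f g : Module.Dual ℝ V} (hf : Continuous f) (hg : Continuous g) {v w : V} (hv : v ≠ 0)
    (hw : w ≠ 0) (hvL : Projectivization.mk ℝ v hv ∈ L) (hwL : Projectivization.mk ℝ w hw ∈ L)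
    (hfgv : 0 < f v * g v) (hfgw : f w * g w < 0) : ∃ x ∈ L, f x.rep * g x.rep = 0 := by
  have hscale (c : ℝˣ) (u : V) : f (c • u) * g (c • u) = (c : ℝ) ^ 2 * (f u * g u) := by
    simp only [Units.smul_def, map_smul, smul_eq_mul]
    ring
  have hc (c : ℝˣ) : 0 < (c : ℝ) ^ 2 := sq_pos_of_ne_zero c.ne_zero
  have smul_pos (c : ℝˣ) : ∀ u ∈ {u | 0 < f u * g u}, c • u ∈ {u | 0 < f u * g u} := fun u hu =>
    (mul_pos (hc c) hu).trans_eq (hscale c u).symm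
  have smul_neg (c : ℝˣ) : ∀ u ∈ {u | f u * g u < 0}, c • u ∈ {u | f u * g u < 0} := fun u hu =>
    (hscale c u).trans_lt (mul_neg_of_pos_of_neg (hc c) hu)
  by_contra! hne
  obtain ⟨x, -, hpos, hneg⟩ := hL _ _
    (isOpen_setOf_rep_mem (isOpen_lt continuous_const (hf.mul hg)) smul_pos)
    (isOpen_setOf_rep_mem (isOpen_lt (hf.mul hg) continuous_const) smul_neg)
    (fun x hx => (hne x hx).lt_or_gt.symm)
    ⟨_, hvL, (rep_mk_mem_iff smul_pos hv).2 hfgv⟩ ⟨_, hwL, (rep_mk_mem_iff smul_neg hw).2 hfgw⟩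
  exact lt_asymm (α := ℝ) hpos hneg

end Topology

end Projectivization

section DoubleCone

variable {V : Type*} [AddCommGroup V] [Module ℝ V] {S : Set V} {p v w : V}

lemma segment_smul_subset (hS : ∀ c : ℝ, 0 < c → ∀ u ∈ S, c • u ∈ S) (hv : v ∈ S) {c : ℝ}
    (hc : 0 < c) : segment ℝ v (c • v) ⊆ S := by
  rintro _ ⟨a, b, ha, hb, hab, rfl⟩
  have hpos : 0 < a + b * c := by
    rcases ha.eq_or_lt with rfl | ha
    · simp_all
    · positivity
  convert hS _ hpos v hv using 1
  module

/-- A double cone is a set that is invariant under nonzero scalars and in which any two points,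
up to the sign of one of them, are joined by exactly one segment: these are the punctured cones
over the convex subsets of projective space. -/
structure IsDoubleCone (S : Set V) : Prop where
  smul_mem : ∀ {c : ℝ}, c ≠ 0 → ∀ {v : V}, v ∈ S → c • v ∈ S
  segment_subset_or : ∀ {v w : V}, v ∈ S → w ∈ S → segment ℝ v w ⊆ S ∨ segment ℝ v (-w) ⊆ S
  not_segment_subset_and : ∀ {v w : V}, ¬(segment ℝ v w ⊆ S ∧ segment ℝ v (-w) ⊆ S)

/-- The part of `S` that is visible from `p`. When `S` is a double cone, this is the one of its
two nappes that contains `p`. -/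
def nappe (S : Set V) (p : V) : Set V := {v | segment ℝ p v ⊆ S}

lemma nappe_subset : nappe S p ⊆ S :=
  fun _ hv => hv (right_mem_segment ℝ _ _)

lemma self_mem_nappe (hp : p ∈ S) : p ∈ nappe S p := by
  simpa [nappe] using hp

namespace IsDoubleCone

lemma neg_mem (hS : IsDoubleCone S) (hv : v ∈ S) : -v ∈ S := by
  simpa using hS.smul_mem (neg_ne_zero.2 one_ne_zero) hv

lemma zero_notMem (hS : IsDoubleCone S) : (0 : V) ∉ S := fun h =>
  hS.not_segment_subset_and (v := 0) (w := 0) (by simpa using h)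

end IsDoubleCone

variable [TopologicalSpace V] [IsTopologicalAddGroup V] [ContinuousSMul ℝ V]

lemma isOpen_nappe (hS : IsOpen S) : IsOpen (nappe S p) := by
  refine isOpen_iff_eventually.2 fun v hv => ?_
  simp only [nappe, segment_eq_image_lineMap, Set.image_subset_iff] at hv ⊢
  refine isCompact_Icc.eventually_forall_of_forall_eventually fun t ht => ?_
  have hcont : Continuous fun q : V × ℝ => AffineMap.lineMap p q.1 q.2 := by
    simp only [AffineMap.lineMap_apply_module']
    fun_prop
  exact hcont.continuousAt.eventually_mem (hS.mem_nhds (hv ht))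

namespace IsDoubleCone

/-- A nappe and its negative are disjoint open sets covering the double cone. -/
lemma subset_nappe_of_isPreconnected (hS : IsDoubleCone S) (hSo : IsOpen S) {A : Set V}
    (hA : IsPreconnected A) (hAS : A ⊆ S) (hp : p ∈ A) : A ⊆ nappe S p := by
  refine hA.subset_left_of_subset_union (isOpen_nappe hSo)
    ((isOpen_nappe hSo (p := p)).preimage continuous_neg) ?_ ?_ ⟨p, hp, self_mem_nappe (hAS hp)⟩
  · exact Set.disjoint_left.2 fun v hv hv' => hS.not_segment_subset_and ⟨hv, hv'⟩
  · exact fun v hv => hS.segment_subset_or (hAS hp) (hAS hv)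

lemma segment_subset_nappe (hS : IsDoubleCone S) (hSo : IsOpen S) (hv : v ∈ nappe S p)
    (hvw : segment ℝ v w ⊆ S) : segment ℝ v w ⊆ nappe S p :=
  Set.subset_union_right.trans <| hS.subset_nappe_of_isPreconnected hSo
    ((convex_segment p v).isPreconnected.union v (right_mem_segment ℝ _ _) (left_mem_segment ℝ _ _)
      (convex_segment v w).isPreconnected)
    (Set.union_subset hv hvw) (Or.inl (left_mem_segment ℝ _ _))

/-- The path from `v` to `w` through `p` stays in `S`, so `w` is visible from `v`. -/
lemma convex_nappe (hS : IsDoubleCone S) (hSo : IsOpen S) : Convex ℝ (nappe S p) := by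
  refine convex_iff_segment_subset.2 fun v hv w hw => hS.segment_subset_nappe hSo hv ?_
  have hvp : p ∈ nappe S v := by rwa [nappe, Set.mem_ofPred_eq, segment_symm]
  exact hS.segment_subset_nappe hSo hvp hw (right_mem_segment ℝ _ _)

lemma smul_mem_nappe (hS : IsDoubleCone S) (hSo : IsOpen S) (hv : v ∈ nappe S p) {c : ℝ}
    (hc : 0 < c) : c • v ∈ nappe S p :=
  hS.segment_subset_nappe hSo hv
    (segment_smul_subset (fun _ hr _ => hS.smul_mem hr.ne') (nappe_subset hv) hc)
    (right_mem_segment ℝ _ _)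

/-- The nappe of an open double cone through the point `p`, as a convex cone. -/
def nappeCone (hS : IsDoubleCone S) (hSo : IsOpen S) (p : V) : ConvexCone ℝ V where
  carrier := nappe S p
  smul_mem' _ hc _ hv := hS.smul_mem_nappe hSo hv hc
  add_mem' v hv w hw := by
    convert hS.smul_mem_nappe hSo (hS.convex_nappe hSo hv hw one_half_pos.le one_half_pos.le
      (add_halves 1)) two_pos using 1
    module

theorem exists_convexCone_eq_union_neg (hS : IsDoubleCone S) (hSo : IsOpen S) :
    ∃ C : ConvexCone ℝ V, IsOpen (C : Set V) ∧ C.Blunt ∧ S = (C : Set V) ∪ -C := by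
  rcases S.eq_empty_or_nonempty with rfl | ⟨p, hp⟩
  · exact ⟨⊥, by simp, by simp [ConvexCone.Blunt], by simp⟩
  refine ⟨hS.nappeCone hSo p, isOpen_nappe hSo, fun h => hS.zero_notMem (nappe_subset h), ?_⟩
  refine Set.Subset.antisymm (fun v hv => hS.segment_subset_or hp hv) ?_
  rintro v (hv | hv)
  · exact nappe_subset hv
  · simpa using hS.neg_mem (nappe_subset hv)

end IsDoubleCone

end DoubleCone

section Convex

variable {n : ℕ} {D : Set (RP n)} {v w : RV n}

lemma isLineR_span_pair (h : LinearIndependent ℝ ![v, w]) :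
    isLineR {x : RP n | x.rep ∈ Submodule.span ℝ {v, w}} := by
  refine ⟨_, ?_, rfl⟩
  rw [← Matrix.range_cons_cons_empty v w ![], finrank_span_eq_card h, Fintype.card_fin]

lemma smul_add_smul_mem_coneOver (h : segment ℝ v w ⊆ coneOver D) {s t : ℝ} (hs : 0 ≤ s)
    (ht : 0 ≤ t) (hst : 0 < s + t) : s • v + t • w ∈ coneOver D := by
  refine mem_coneOver_of_smul_mem (c := (s + t)⁻¹) (h ?_)
  refine ⟨s / (s + t), t / (s + t), by positivity, by positivity, by field_simp, ?_⟩
  module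

lemma not_segment_subset_coneOver_and (hline : ∀ L, isLineR L → ¬L ⊆ D) :
    ¬(segment ℝ v w ⊆ coneOver D ∧ segment ℝ v (-w) ⊆ coneOver D) := by
  rintro ⟨hpos, hneg⟩
  have of_nonneg {s t : ℝ} (hs : 0 ≤ s) (hst : s ≠ 0 ∨ t ≠ 0) : s • v + t • w ∈ coneOver D := by
    rcases le_total 0 t with ht | ht
    · exact smul_add_smul_mem_coneOver hpos hs ht (by grind)
    · simpa using smul_add_smul_mem_coneOver hneg hs (neg_nonneg.2 ht) (by grind)
  have combination_mem {s t : ℝ} (hst : s ≠ 0 ∨ t ≠ 0) : s • v + t • w ∈ coneOver D := by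
    rcases le_total 0 s with hs | hs
    · exact of_nonneg hs hst
    · rw [← neg_mem_coneOver_iff, neg_add, ← neg_smul, ← neg_smul]
      exact of_nonneg (neg_nonneg.2 hs) (by simpa using hst)
  have hli : LinearIndependent ℝ ![v, w] := LinearIndependent.pair_iff.2 fun s t h => by
    by_contra hst
    exact ne_zero_of_mem_coneOver (combination_mem (not_and_or.1 hst)) h
  refine hline _ (isLineR_span_pair hli) fun x hx => ?_
  obtain ⟨s, t, hst⟩ := Submodule.mem_span_pair.1 hx
  rw [← rep_mem_coneOver_iff, ← hst]
  refine combination_mem (not_and_or.1 ?_)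
  rintro ⟨rfl, rfl⟩
  exact x.rep_nonzero (by simp [← hst])

lemma exists_dual_coordinates {V : Type*} [AddCommGroup V] [Module ℝ V] {v w : V}
    (h : LinearIndependent ℝ ![v, w]) :
    ∃ f g : Module.Dual ℝ V, ∀ s t : ℝ, f (s • v + t • w) = s ∧ g (s • v + t • w) = t := by
  obtain ⟨F, hF⟩ := LinearMap.exists_leftInverse_of_injective (Fintype.linearCombination ℝ ![v, w])
    (LinearMap.ker_eq_bot.2 h.fintypeLinearCombination_injective)
  have F_apply (s t : ℝ) : F (s • v + t • w) = ![s, t] := by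
    simpa [Fintype.linearCombination_apply] using LinearMap.congr_fun hF ![s, t]
  exact ⟨LinearMap.proj 0 ∘ₗ F, LinearMap.proj 1 ∘ₗ F, fun s t => by simp [F_apply]⟩

lemma smul_add_smul_mem_coneOver_of_mul_eq {s t a b : ℝ} (hb : b ≠ 0) (hst : b * s = a * t)
    (h : s • v + t • w ∈ coneOver D) : a • v + b • w ∈ coneOver D := by
  refine mem_coneOver_of_smul_mem (c := t) ?_
  convert (smul_mem_coneOver_iff hb).2 h using 1
  rw [smul_add, smul_add, smul_smul, smul_smul, smul_smul, smul_smul, hst, mul_comm a, mul_comm b]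

/-- The points `a v + b w` and `c v - d w` separate `v` from `w` on the projective line through
them; the product of the linear forms vanishing at the former two detects this. -/
lemma mem_coneOver_or_of_linearIndependent
    (hconn : ∀ L, isLineR L → IsPreconnected (D ∩ L)) (hv : v ∈ coneOver D) (hw : w ∈ coneOver D)
    (hli : LinearIndependent ℝ ![v, w]) {a b c d : ℝ} (ha : 0 < a) (hb : 0 < b) (hc : 0 < c)
    (hd : 0 < d) : a • v + b • w ∈ coneOver D ∨ c • v + d • -w ∈ coneOver D := by
  obtain ⟨f, g, hfg⟩ := exists_dual_coordinates hli
  obtain ⟨hv0, hvD⟩ := mem_coneOver_iff.1 hv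
  obtain ⟨hw0, hwD⟩ := mem_coneOver_iff.1 hw
  have hfgv : f v = 1 ∧ g v = 0 := by simpa using hfg 1 0
  have hfgw : f w = 0 ∧ g w = 1 := by simpa using hfg 0 1
  obtain ⟨x, ⟨hxD, hxL⟩, hx⟩ := exists_dual_mul_eq_zero_of_isPreconnected
    (hconn _ (isLineR_span_pair hli)) (b • f - a • g).continuous_of_finiteDimensional
    (d • f + c • g).continuous_of_finiteDimensional hv0 hw0
    ⟨hvD, (rep_mk_mem_submodule_iff _ hv0).2 (Submodule.mem_span_of_mem (by simp))⟩
    ⟨hwD, (rep_mk_mem_submodule_iff _ hw0).2 (Submodule.mem_span_of_mem (by simp))⟩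
    (by simpa [hfgv] using mul_pos hb hd) (by simpa [hfgw] using mul_pos ha hc)
  obtain ⟨s, t, hst⟩ := Submodule.mem_span_pair.1 hxL
  have hmem : s • v + t • w ∈ coneOver D := hst ▸ rep_mem_coneOver_iff.2 hxD
  simp only [← hst, LinearMap.sub_apply, LinearMap.add_apply, LinearMap.smul_apply, hfg,
    smul_eq_mul, mul_eq_zero] at hx
  rcases hx with hx | hx
  · exact Or.inl (smul_add_smul_mem_coneOver_of_mul_eq hb.ne' (by linarith) hmem)
  · rw [smul_neg, ← neg_smul]
    exact Or.inr (smul_add_smul_mem_coneOver_of_mul_eq (neg_ne_zero.2 hd.ne') (by linarith) hmem)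

lemma segment_subset_coneOver_or (hconn : ∀ L, isLineR L → IsPreconnected (D ∩ L))
    (hv : v ∈ coneOver D) (hw : w ∈ coneOver D) :
    segment ℝ v w ⊆ coneOver D ∨ segment ℝ v (-w) ⊆ coneOver D := by
  by_cases hli : LinearIndependent ℝ ![v, w]
  · by_contra! hnot
    rw [← openSegment_subset_iff_segment_subset hv hw,
      ← openSegment_subset_iff_segment_subset hv (neg_mem_coneOver_iff.2 hw), Set.not_subset,
      Set.not_subset] at hnot
    obtain ⟨⟨_, ⟨a, b, ha, hb, -, rfl⟩, hpos⟩, _, ⟨c, d, hc, hd, -, rfl⟩, hneg⟩ := hnot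
    exact (mem_coneOver_or_of_linearIndependent hconn hv hw hli ha hb hc hd).elim hpos hneg
  · obtain ⟨r, rfl⟩ : ∃ r : ℝ, r • v = w := by
      simpa [LinearIndependent.pair_iff' (ne_zero_of_mem_coneOver hv)] using hli
    have hcone (c : ℝ) (hc : 0 < c) : ∀ u ∈ coneOver D, c • u ∈ coneOver D :=
      fun _ hu => (smul_mem_coneOver_iff hc.ne').2 hu
    rcases (smul_ne_zero_iff.1 (ne_zero_of_mem_coneOver hw)).1.lt_or_gt with hr | hr
    · rw [← neg_smul]
      exact Or.inr (segment_smul_subset hcone hv (neg_pos.2 hr))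
    · exact Or.inl (segment_smul_subset hcone hv hr)

lemma isDoubleCone_coneOver (hD : convexR D) : IsDoubleCone (coneOver D) where
  smul_mem hc _ hv := (smul_mem_coneOver_iff hc).2 hv
  segment_subset_or hv hw := segment_subset_coneOver_or hD.2 hv hw
  not_segment_subset_and := not_segment_subset_coneOver_and hD.1

theorem exists_convexCone_coneOver_eq (hDo : IsOpen D) (hD : convexR D) :
    ∃ C : ConvexCone ℝ (RV n), IsOpen (C : Set (RV n)) ∧ C.Blunt ∧
      coneOver D = (C : Set (RV n)) ∪ -C :=
  (isDoubleCone_coneOver hD).exists_convexCone_eq_union_neg (isOpen_coneOver hDo)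

end Convex

section ProjImage

lemma contractibleSpace_of_retract {X Y : Type*} [TopologicalSpace X] [TopologicalSpace Y]
    [ContractibleSpace Y] (f : C(X, Y)) (g : C(Y, X)) (h : ∀ x, g (f x) = x) :
    ContractibleSpace X := by
  rw [contractible_iff_id_nullhomotopic]
  have hid : ContinuousMap.id X = g.comp ((ContinuousMap.id Y).comp f) :=
    ContinuousMap.ext fun x => (h x).symm
  exact hid ▸ ((id_nullhomotopic Y).comp_left f).comp_right g

lemma exists_mem_ne_zero_apply_eq_zero {K V : Type*} [Field K] [AddCommGroup V] [Module K V]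
    (f : Module.Dual K V) {W : Submodule K V} (hW : 1 < Module.finrank K W) :
    ∃ v ∈ W, v ≠ 0 ∧ f v = 0 := by
  have : FiniteDimensional K W := Module.finite_of_finrank_pos (one_pos.trans hW)
  have hker : LinearMap.ker (f.domRestrict W) ≠ ⊥ :=
    LinearMap.ker_ne_bot_of_finrank_lt (by simpa using hW)
  obtain ⟨v, hv, hv0⟩ := (Submodule.ne_bot_iff _).1 hker
  exact ⟨v, v.2, by simpa using hv0, by simpa using hv⟩

/-- The representative of a point of projective space on which `f` takes the value `1`. It is `0`
by convention on the hyperplane where `f` vanishes. -/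
def affineRep {K V : Type*} [DivisionRing K] [AddCommGroup V] [Module K V] (f : Module.Dual K V)
    (x : Projectivization K V) : V :=
  (f x.rep)⁻¹ • x.rep

lemma affineRep_mk {K V : Type*} [Field K] [AddCommGroup V] [Module K V] (f : Module.Dual K V)
    {v : V} (hv : v ≠ 0) : affineRep f (Projectivization.mk K v hv) = (f v)⁻¹ • v := by
  obtain ⟨a, ha⟩ := Projectivization.exists_smul_eq_mk_rep K v hv
  rw [affineRep, ← ha, Units.smul_def, map_smul, smul_smul, smul_eq_mul, mul_inv, mul_comm,
    mul_inv_cancel_left₀ a.ne_zero]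

lemma continuousOn_affineRep {K V : Type*} [Field K] [TopologicalSpace K] [T1Space K]
    [ContinuousInv₀ K] [AddCommGroup V] [Module K V] [TopologicalSpace V] [ContinuousSMul K V]
    (f : StrongDual K V) :
    ContinuousOn (affineRep (f : Module.Dual K V)) {x | f x.rep ≠ 0} := by
  have hinv (c : Kˣ) : ∀ v ∈ {v | f v ≠ 0}, c • v ∈ {v | f v ≠ 0} := fun v hv => by
    simpa [Units.smul_def] using hv
  have hopen : IsOpen {x : Projectivization K V | f x.rep ≠ 0} :=
    isOpen_setOf_rep_mem (isOpen_ne.preimage f.continuous) hinv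
  rw [isQuotientMap_mk'.continuousOn_isOpen_iff hopen]
  have hcomp : affineRep (f : Module.Dual K V) ∘ Projectivization.mk' K =
      fun v : {v : V // v ≠ 0} => (f v)⁻¹ • (v : V) :=
    funext fun v => affineRep_mk (f : Module.Dual K V) v.2
  rw [hcomp]
  have hf : Continuous fun v : {v : V // v ≠ 0} => f v := f.continuous.comp continuous_subtype_val
  exact (hf.continuousOn.inv₀ fun v hv => (rep_mk_mem_iff hinv v.2).1 hv).smul
    continuous_subtype_val.continuousOn

variable {𝕜 V : Type*} [RCLike 𝕜] [NormedAddCommGroup V] [NormedSpace 𝕜 V] [NormedSpace ℝ V]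
  [IsScalarTower ℝ 𝕜 V] {T : Set V}

variable (𝕜) in
lemma exists_strongDual_ne_zero_of_convex (hTo : IsOpen T) (hTc : Convex ℝ T) (hT0 : 0 ∉ T) :
    ∃ f : StrongDual 𝕜 V, ∀ v ∈ T, f v ≠ 0 := by
  obtain ⟨f, hf⟩ := RCLike.geometric_hahn_banach_open_point (𝕜 := 𝕜) hTc hTo hT0
  refine ⟨f, fun v hv h => ?_⟩
  simpa [h] using hf v hv

variable (𝕜) in
/-- Glued by a partition of unity: for each `v` the scalars `c` with `c • v ∈ T` form a convex
set. -/
lemma exists_continuousMap_smul_mem (hTo : IsOpen T) (hTc : Convex ℝ T) :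
    ∃ s : C({v : V // ∃ c : 𝕜, c • v ∈ T}, 𝕜), ∀ v, s v • v.1 ∈ T := by
  refine exists_continuous_forall_mem_convex_of_local_const
    (t := fun v : {v : V // ∃ c : 𝕜, c • v ∈ T} => {c : 𝕜 | c • v.1 ∈ T}) ?_ ?_
  · exact fun v => hTc.linear_preimage ((LinearMap.toSpanSingleton 𝕜 V v.1).restrictScalars ℝ)
  · intro v
    obtain ⟨c, hc⟩ := v.2
    have hcont : Continuous fun w : {v : V // ∃ c : 𝕜, c • v ∈ T} => c • w.1 :=
      continuous_subtype_val.const_smul c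
    exact ⟨c, hcont.continuousAt.eventually_mem (hTo.mem_nhds hc)⟩

lemma exists_continuousMap_mk_eq (hTo : IsOpen T) (hTc : Convex ℝ T) (hT0 : 0 ∉ T) :
    ∃ s : C(projImage 𝕜 T, V), ∀ x, s x ∈ T ∧ ∃ h, Projectivization.mk 𝕜 (s x) h = x := by
  obtain ⟨f, hf⟩ := exists_strongDual_ne_zero_of_convex 𝕜 hTo hTc hT0
  obtain ⟨s, hs⟩ := exists_continuousMap_smul_mem 𝕜 hTo hTc
  have f_rep_ne_zero (x : projImage 𝕜 T) : f x.1.rep ≠ 0 := fun h => by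
    obtain ⟨c, hc⟩ := (mem_projImage_iff hT0).1 x.2
    exact hf _ hc (by rw [map_smul, h, smul_zero])
  have exists_smul_mem (x : projImage 𝕜 T) :
      ∃ c : 𝕜, c • affineRep (f : Module.Dual 𝕜 V) x ∈ T := by
    obtain ⟨c, hc⟩ := (mem_projImage_iff hT0).1 x.2
    exact ⟨c * f x.1.rep, by simpa [affineRep, smul_smul, f_rep_ne_zero x] using hc⟩
  let r : C(projImage 𝕜 T, {v : V // ∃ c : 𝕜, c • v ∈ T}) :=
    ⟨fun x => ⟨affineRep (f : Module.Dual 𝕜 V) x, exists_smul_mem x⟩,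
      (continuousOn_iff_continuous_domRestrict.1
        ((continuousOn_affineRep f).mono fun x hx => f_rep_ne_zero ⟨x, hx⟩)).subtype_mk _⟩
  refine ⟨⟨fun x => s (r x) • (r x).1, by fun_prop⟩, fun x => ⟨hs (r x), ?_⟩⟩
  have h0 : s (r x) • (r x).1 ≠ 0 := fun h => hT0 (h ▸ hs (r x))
  refine ⟨h0, ?_⟩
  calc Projectivization.mk 𝕜 (s (r x) • (r x).1) h0
    _ = Projectivization.mk 𝕜 x.1.rep x.1.rep_nonzero :=
      (Projectivization.mk_eq_mk_iff' 𝕜 _ _ _ _).2 ⟨s (r x) * (f x.1.rep)⁻¹, mul_smul _ _ _⟩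
    _ = x := x.1.mk_rep

lemma contractibleSpace_projImage_inter (hTo : IsOpen T) (hTc : Convex ℝ T) (hT0 : 0 ∉ T)
    {W : Submodule 𝕜 V} (hne : (projImage 𝕜 T ∩ {x | x.rep ∈ W}).Nonempty) :
    ContractibleSpace ↥(projImage 𝕜 T ∩ {x | x.rep ∈ W}) := by
  obtain ⟨s, hs⟩ := exists_continuousMap_mk_eq (𝕜 := 𝕜) hTo hTc hT0
  have lift_mem (x : projImage 𝕜 T) (hx : x.1.rep ∈ W) : s x ∈ T ∩ W := by
    obtain ⟨hsT, h0, hsx⟩ := hs x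
    exact ⟨hsT, (rep_mk_mem_submodule_iff W h0).1 (hsx ▸ hx)⟩
  have hM : Convex ℝ (T ∩ W) := hTc.inter (W.restrictScalars ℝ).convex
  obtain ⟨x, hxT, hxW⟩ := hne
  have : ContractibleSpace ↥(T ∩ W) := hM.contractibleSpace ⟨_, lift_mem ⟨x, hxT⟩ hxW⟩
  have hM0 (v : ↥(T ∩ W)) : v.1 ≠ 0 := fun h => hT0 (h ▸ v.2.1)
  let lift : C(↥(projImage 𝕜 T ∩ {x | x.rep ∈ W}), ↥(T ∩ W)) :=
    ⟨fun x => ⟨s ⟨x, x.2.1⟩, lift_mem ⟨x, x.2.1⟩ x.2.2⟩, by fun_prop⟩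
  let proj : C(↥(T ∩ W), ↥(projImage 𝕜 T ∩ {x | x.rep ∈ W})) :=
    ⟨fun v => ⟨Projectivization.mk' 𝕜 ⟨v, hM0 v⟩, ⟨_, v.2.1, rfl⟩,
      (rep_mk_mem_submodule_iff W (hM0 v)).2 v.2.2⟩,
      (isQuotientMap_mk'.continuous.comp (continuous_subtype_val.subtype_mk hM0)).subtype_mk _⟩
  exact contractibleSpace_of_retract lift proj fun x => Subtype.ext (hs ⟨x, x.2.1⟩).2.2

theorem cConvex_projImage {n : ℕ} {T : Set (CV n)} (hTo : IsOpen T) (hTc : Convex ℝ T)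
    (hT0 : 0 ∉ T) : cConvex (projImage ℂ T) := by
  refine ⟨?_, ?_⟩
  · rintro _ ⟨W, hW, rfl⟩ hWT
    obtain ⟨f, hf⟩ := exists_strongDual_ne_zero_of_convex ℂ hTo hTc hT0
    obtain ⟨z, hzW, hz0, hfz⟩ :=
      exists_mem_ne_zero_apply_eq_zero (f : Module.Dual ℂ (CV n)) (hW ▸ one_lt_two)
    obtain ⟨c, hc⟩ := (mk_mem_projImage_iff hT0 hz0).1
      (hWT ((rep_mk_mem_submodule_iff W hz0).2 hzW))
    exact hf _ hc (by simpa using Or.inr hfz)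
  · rintro _ ⟨W, -, rfl⟩
    refine ⟨?_, fun hne => ?_⟩
    · rcases Set.eq_empty_or_nonempty (projImage ℂ T ∩ {z | z.rep ∈ W}) with hempty | hne
      · exact hempty ▸ isPreconnected_empty
      · have := contractibleSpace_projImage_inter hTo hTc hT0 hne
        exact isPreconnected_iff_preconnectedSpace.2 inferInstance
    · have := contractibleSpace_projImage_inter hTo hTc hT0 hne
      infer_instance

end ProjImage

section Tube

variable {n : ℕ} {D : Set (RP n)} {C : ConvexCone ℝ (RV n)} {v w : RV n} {a b : ℂ}

lemma cplx_neg (v : RV n) : cplx (-v) = -cplx v := by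
  ext i
  simp [cplx]

lemma cplx_smul (r : ℝ) (v : RV n) : cplx (r • v) = (r : ℂ) • cplx v := by
  ext i
  simp [cplx]

lemma cplx_re_add_I_smul_cplx_im (z : CV n) :
    cplx (fun i => (z i).re) + Complex.I • cplx (fun i => (z i).im) = z := by
  ext i
  simp [cplx, mul_comm Complex.I]

/-- The set `C + iC` of the complex vectors whose real and imaginary parts both lie in `C`. -/
def complexCone (C : Set (RV n)) : Set (CV n) :=
  {z | (fun i => (z i).re) ∈ C ∧ (fun i => (z i).im) ∈ C}

lemma isOpen_complexCone {C : Set (RV n)} (hC : IsOpen C) : IsOpen (complexCone C) :=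
  (hC.preimage (by fun_prop)).inter (hC.preimage (by fun_prop))

lemma convex_complexCone {C : Set (RV n)} (hC : Convex ℝ C) : Convex ℝ (complexCone C) :=
  (hC.linear_preimage (Complex.reLm.compLeft (Fin (n + 1)))).inter
    (hC.linear_preimage (Complex.imLm.compLeft (Fin (n + 1))))

lemma zero_notMem_complexCone {C : Set (RV n)} (hC : 0 ∉ C) : 0 ∉ complexCone C :=
  fun h => hC h.1

lemma smul_cplx_add_smul_cplx_mem_complexCone_iff {C : Set (RV n)} :
    a • cplx v + b • cplx w ∈ complexCone C ↔
      a.re • v + b.re • w ∈ C ∧ a.im • v + b.im • w ∈ C := by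
  simp [complexCone, cplx, Pi.add_def]

/-- Rotate `a` onto the positive real axis if `b` is ahead of it, onto the positive imaginary axis
if `b` is behind it, and onto the diagonal if both have the same direction. -/
lemma exists_mul_mem_quadrant (hab : 0 ≤ (a * conj b).re) (h0 : a ≠ 0 ∨ b ≠ 0) :
    ∃ c : ℂ, (0 ≤ (c * a).re ∧ 0 ≤ (c * b).re ∧ 0 < (c * a).re + (c * b).re) ∧
      0 ≤ (c * a).im ∧ 0 ≤ (c * b).im ∧ 0 < (c * a).im + (c * b).im := by
  obtain ⟨d, hd⟩ : ∃ d, conj a * b = d := ⟨_, rfl⟩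
  have hdre : 0 ≤ d.re := by simpa [← hd] using hab
  have hna := Complex.normSq_nonneg a
  have hnb := Complex.normSq_nonneg b
  have haa : conj a * a = Complex.normSq a := Complex.normSq_eq_conj_mul_self.symm
  have hbb : conj b * b = Complex.normSq b := Complex.normSq_eq_conj_mul_self.symm
  have ha_pos (hne : d.im ≠ 0) : 0 < Complex.normSq a :=
    Complex.normSq_pos.2 fun ha => hne (by simp [← hd, ha])
  rcases lt_trichotomy d.im 0 with him | him | him
  · refine ⟨Complex.I * conj a, ?_⟩
    simpa [mul_assoc, haa, hd, him, him.le, hna, hdre] using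
      add_pos_of_pos_of_nonneg (ha_pos him.ne) hdre
  · have hd_real : d = d.re := Complex.ext rfl (by simp [him])
    have hba : conj b * a = d.re := by simpa [← hd, mul_comm a] using congrArg conj hd_real
    have hca : conj (a + b) * a = ((Complex.normSq a + d.re : ℝ) : ℂ) := by
      simp [add_mul, haa, hba]
    have hcb : conj (a + b) * b = ((Complex.normSq b + d.re : ℝ) : ℂ) := by
      simp [add_mul, hd, hbb, ← hd_real, add_comm]
    have hpos : 0 < Complex.normSq a + d.re + (Complex.normSq b + d.re) := by
      have := h0.imp Complex.normSq_pos.2 Complex.normSq_pos.2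
      grind
    refine ⟨(1 + Complex.I) * conj (a + b), ?_⟩
    rw [mul_assoc, mul_assoc, hca, hcb]
    simp [add_nonneg, hna, hnb, hdre, hpos]
  · refine ⟨conj a, ?_⟩
    simpa [haa, hd, him, him.le, hna, hdre] using add_pos_of_pos_of_nonneg (ha_pos him.ne') hdre

lemma smul_add_smul_mem_convexCone {V : Type*} [AddCommGroup V] [Module ℝ V] {C : ConvexCone ℝ V}
    {v w : V} (hv : v ∈ C) (hw : w ∈ C) {s t : ℝ} (hs : 0 ≤ s) (ht : 0 ≤ t) (hst : 0 < s + t) :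
    s • v + t • w ∈ C := by
  rcases hs.eq_or_lt with rfl | hs
  · simpa using C.smul_mem (by simpa using hst) hw
  rcases ht.eq_or_lt with rfl | ht
  · simpa using C.smul_mem hs hv
  · exact C.add_mem (C.smul_mem hs hv) (C.smul_mem ht hw)

lemma exists_smul_mem_complexCone (hv : v ∈ C) (hw : w ∈ C) (hab : 0 ≤ (a * conj b).re)
    (h0 : a ≠ 0 ∨ b ≠ 0) :
    ∃ c : ℂ, c • (a • cplx v + b • cplx w) ∈ complexCone (C : Set (RV n)) := by
  obtain ⟨c, ⟨hare, hbre, hre⟩, haim, hbim, him⟩ := exists_mul_mem_quadrant hab h0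
  refine ⟨c, ?_⟩
  rw [smul_add, smul_smul, smul_smul, smul_cplx_add_smul_cplx_mem_complexCone_iff]
  exact ⟨smul_add_smul_mem_convexCone hv hw hare hbre hre,
    smul_add_smul_mem_convexCone hv hw haim hbim him⟩

lemma smul_add_smul_mem_coneOver_of_realSeg_subset (h : realSeg v w ⊆ D) {s t : ℝ}
    (hst : 0 ≤ s * t) (h0 : s • v + t • w ≠ 0) : s • v + t • w ∈ coneOver D :=
  mem_coneOver_iff.2 ⟨h0, h ⟨s, t, hst, h0, rfl⟩⟩

lemma realSeg_subset_of_mem (hDC : (C : Set (RV n)) ⊆ coneOver D) (hv : v ∈ C) (hw : w ∈ C) :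
    realSeg v w ⊆ D := by
  rintro _ ⟨s, t, hst, h0, rfl⟩
  suffices h : s • v + t • w ∈ coneOver D from (mem_coneOver_iff.1 h).2
  have hst0 : s ≠ 0 ∨ t ≠ 0 := by
    by_contra! h
    exact h0 (by simp [h.1, h.2])
  rcases mul_nonneg_iff.1 hst with ⟨hs, ht⟩ | ⟨hs, ht⟩
  · exact hDC (smul_add_smul_mem_convexCone hv hw hs ht (by clear h0; grind))
  · rw [← neg_mem_coneOver_iff, neg_add, ← neg_smul, ← neg_smul]
    exact hDC (smul_add_smul_mem_convexCone hv hw (neg_nonneg.2 hs) (neg_nonneg.2 ht)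
      (by clear h0; grind))

lemma realSeg_neg_neg_subset (v w : RV n) : realSeg (-v) (-w) ⊆ realSeg v w := by
  rintro _ ⟨s, t, hst, h0, rfl⟩
  have hneg : s • -v + t • -w = (-s) • v + (-t) • w := by simp
  exact ⟨-s, -t, by simpa using hst, hneg ▸ h0, by simp only [hneg]⟩

/-- A linear form that is negative on `C` vanishes at some nonnegative combination of `v` and `w`,
which lies in neither `C` nor `-C` and is therefore zero. -/
lemma exists_eq_smul_of_realSeg_subset (hCo : IsOpen (C : Set (RV n))) (hCb : C.Blunt)
    (hDC : coneOver D = (C : Set (RV n)) ∪ -C) (hv : v ∈ C) (hw : -w ∈ C)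
    (hD : realSeg v w ⊆ D) : ∃ r : ℝ, w = r • v := by
  obtain ⟨f, hf⟩ := geometric_hahn_banach_open_point C.convex hCo hCb
  have hneg (u : RV n) (hu : u ∈ C) : f u < 0 := by simpa using hf u hu
  have hfv := hneg v hv
  have hfw : 0 < f w := by simpa using hneg _ hw
  have hzero : f w • v + (-f v) • w = 0 := by
    by_contra h0
    have hker : f (f w • v + (-f v) • w) = 0 := by simp [mul_comm]
    have hmem := smul_add_smul_mem_coneOver_of_realSeg_subset hD
      (mul_nonneg hfw.le (neg_nonneg.2 hfv.le)) h0
    rw [hDC] at hmem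
    rcases hmem with hmem | hmem
    · exact (hneg _ hmem).ne hker
    · exact (hneg _ hmem).ne (by rw [map_neg, hker, neg_zero])
  refine ⟨f w / f v, ?_⟩
  rw [div_eq_inv_mul, mul_smul, eq_inv_smul_iff₀ hfv.ne]
  rw [neg_smul, ← sub_eq_add_neg, sub_eq_zero] at hzero
  exact hzero.symm

lemma exists_smul_mem_complexCone_of_realSeg_subset (hCo : IsOpen (C : Set (RV n)))
    (hCb : C.Blunt) (hDC : coneOver D = (C : Set (RV n)) ∪ -C) (hv0 : v ≠ 0) (hw0 : w ≠ 0)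
    (hD : realSeg v w ⊆ D) (hab : 0 ≤ (a * conj b).re) (h0 : a • cplx v + b • cplx w ≠ 0) :
    ∃ c : ℂ, c • (a • cplx v + b • cplx w) ∈ complexCone (C : Set (RV n)) := by
  have hvD : v ∈ (C : Set (RV n)) ∪ -C := hDC ▸ by
    simpa using smul_add_smul_mem_coneOver_of_realSeg_subset hD (s := 1) (t := 0) (by simp)
      (by simpa using hv0)
  have hwD : w ∈ (C : Set (RV n)) ∪ -C := hDC ▸ by
    simpa using smul_add_smul_mem_coneOver_of_realSeg_subset hD (s := 0) (t := 1) (by simp)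
      (by simpa using hw0)
  wlog hv : v ∈ C generalizing v w a b
  · have hv' : -v ∈ C := hvD.resolve_left hv
    have hneg : (-a) • cplx (-v) + (-b) • cplx (-w) = a • cplx v + b • cplx w := by
      simp [cplx_neg]
    rw [← hneg]
    exact this (neg_ne_zero.2 hv0) (neg_ne_zero.2 hw0) ((realSeg_neg_neg_subset v w).trans hD)
      (by simpa using hab) (hneg ▸ h0) (Or.inl hv') (by simpa [or_comm] using hwD) hv'
  rcases hwD with hw | hw
  · exact exists_smul_mem_complexCone hv hw hab (by grind [zero_smul])
  · obtain ⟨r, rfl⟩ := exists_eq_smul_of_realSeg_subset hCo hCb hDC hv hw hD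
    have hsum : a • cplx v + b • cplx (r • v) = (a + b * r) • cplx v := by
      rw [cplx_smul]
      module
    rw [hsum] at h0 ⊢
    simpa using exists_smul_mem_complexCone hv hv (a := a + b * r) (b := 0) (by simp)
      (Or.inl (smul_ne_zero_iff.1 h0).1)

theorem eTube_eq_projImage_complexCone (hCo : IsOpen (C : Set (RV n))) (hCb : C.Blunt)
    (hDC : coneOver D = (C : Set (RV n)) ∪ -C) :
    eTube D = projImage ℂ (complexCone (C : Set (RV n))) := by
  ext x
  simp only [eTube, Set.mem_iUnion, exists_prop]
  constructor
  · rintro ⟨v, w, hv0, hw0, hD, a, b, hab, h0, rfl⟩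
    exact (mk_mem_projImage_iff (zero_notMem_complexCone hCb) h0).2
      (exists_smul_mem_complexCone_of_realSeg_subset hCo hCb hDC hv0 hw0 hD hab h0)
  · rintro ⟨⟨z, hz0⟩, ⟨hre, him⟩, rfl⟩
    refine ⟨fun i => (z i).re, fun i => (z i).im, fun h => hCb (h ▸ hre), fun h => hCb (h ▸ him),
      realSeg_subset_of_mem (hDC ▸ Set.subset_union_left) hre him, 1, Complex.I, by simp, ?_⟩
    simp only [one_smul, cplx_re_add_I_smul_cplx_im]
    exact ⟨hz0, rfl⟩

end Tube

theorem eTube_cConvex_of_C1_boundary_general {n : ℕ} {D : Set (RP n)} (hDo : IsOpen D)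
    (hD : convexR D) : cConvex (eTube D) := by
  obtain ⟨C, hCo, hCb, hDC⟩ := exists_convexCone_coneOver_eq hDo hD
  rw [eTube_eq_projImage_complexCone hCo hCb hDC]
  exact cConvex_projImage (isOpen_complexCone hCo) (convex_complexCone C.convex)
    (zero_notMem_complexCone hCb)

/-- If `D ⊆ ℝℙⁿ` is an open properly convex set whose boundary is of
class `C¹` (in an affine chart in which `D` is bounded), then the elliptic tube
`D^e ⊆ ℂℙⁿ` is ℂ-convex. -/
theorem eTube_cConvex_of_C1_boundary
    (n : ℕ) (D : Set (RP n)) (hDo : IsOpen D) (hpc : properlyConvexR D)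
    (g : Matrix.GeneralLinearGroup (Fin (n + 1)) ℝ)
    (hrange : D ⊆ Set.range (chartMap g))
    (hbdd : Bornology.IsBounded (chartMap g ⁻¹' D))
    (hC1 : boundaryC1 (chartMap g ⁻¹' D)) :
    cConvex (eTube D) := by
  exact eTube_cConvex_of_C1_boundary_general hDo hpc.1
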